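/- arXiv:2310.17735 — 2 statements merged into one kernel-verified Lean document; each statement's English description precedes it below -/
import Mathlib

section
/- Let X, Y, A, B be finite nonempty sets. For a linear map Γ : M_{X×Y} → M_{A×B} the following are equivalent: (i) Γ is a QNS correlation of quantum type, i.e. there exist finite-dimensional complex Hilbert spaces H_A and H_B, stochastic operator matrices Ẽ = (Ẽ_{x,x',a,a'}) over (X,A) acting on H_A and F̃ = (F̃_{y,y',b,b'}) over (Y,B) acting on H_B, and a unit vector ξ ∈ H_A ⊗ H_B such that Γ(ε_{x,x'} ⊗ ε_{y,y'}) = Σ_{a,a'∈A, b,b'∈B} ⟨(Ẽ_{x,x',a,a'} ⊗ F̃_{y,y',b,b'}) ξ, ξ⟩ ε_{a,a'} ⊗ ε_{b,b'} for all x,x' ∈ X and y,y' ∈ Y; (ii) there exist finite-dimensional complex Hilbert spaces H_A, K_A, H_B, K_B, block operator isometries U = (U_{a,x}) over (X,A) with entries in B(H_A,K_A) and V = (V_{b,y}) over (Y,B) with entries in B(H_B,K_B), and a density operator σ on H_A ⊗ H_B, such that Γ(ε_{x,x'} ⊗ ε_{y,y'}) = Σ_{a,a'∈A, b,b'∈B}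 Tr(σ (U_{a,x}* U_{a',x'} ⊗ V_{b,y}* V_{b',y'})) ε_{a,a'} ⊗ ε_{b,b'}. -/
open Matrix
open scoped Kronecker ComplexOrder

/-- A stochastic operator matrix over `(X, A)` acting on `ℂ^d`, given as a family of
`d × d` matrices: the associated block matrix on `ℂ^{X×A} ⊗ ℂ^d` is positive
semidefinite and the partial trace over `A` is the identity. -/
def IsStochasticMatrixFam {X A : Type*} [Fintype X] [Fintype A] [DecidableEq X]
    {d : ℕ} (E : X → X → A → A → Matrix (Fin d) (Fin d) ℂ) : Prop :=
  (Matrix.PosSemidef (Matrix.of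
      (fun (p q : (X × A) × Fin d) => E p.1.1 q.1.1 p.1.2 q.1.2 p.2 q.2))) ∧
  (∀ x x' : X, ∑ a : A, E x x' a a = if x = x' then 1 else 0)

/-- A block operator isometry over `(X, A)` with finite-dimensional entries,
given as a family of `k × d` matrices. -/
def IsBlockIsometryFam {X A : Type*} [Fintype A] [DecidableEq X]
    {d k : ℕ} (U : A → X → Matrix (Fin k) (Fin d) ℂ) : Prop :=
  ∀ x x' : X, ∑ a : A, (U a x)ᴴ * (U a x') = if x = x' then 1 else 0


theorem stoch_of_isom {X A : Type*} [Fintype X] [Fintype A] [DecidableEq X]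
    {d k : ℕ} (U : A → X → Matrix (Fin k) (Fin d) ℂ) (hU : IsBlockIsometryFam U) :
    IsStochasticMatrixFam (fun x x' a a' => (U a x)ᴴ * U a' x') := by
  refine ⟨?_, hU⟩
  have h := Matrix.posSemidef_conjTranspose_mul_self
    (Matrix.of (fun (r : Fin k) (p : (X × A) × Fin d) => U p.1.2 p.1.1 r p.2))
  convert h using 1
  ext p q
  simp [Matrix.mul_apply]

open scoped MatrixOrder in
theorem psd_factor {n : Type*} [Fintype n] {M : Matrix n n ℂ} (hM : M.PosSemidef) :
    ∃ C : Matrix n n ℂ, M = Cᴴ * C := by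
  classical
  exact CStarAlgebra.nonneg_iff_eq_star_mul_self.mp hM.nonneg

theorem isom_of_stoch {X A : Type*} [Fintype X] [Fintype A] [DecidableEq X]
    {d : ℕ} (E : X → X → A → A → Matrix (Fin d) (Fin d) ℂ) (hE : IsStochasticMatrixFam E) :
    ∃ (k : ℕ) (U : A → X → Matrix (Fin k) (Fin d) ℂ), IsBlockIsometryFam U ∧
      ∀ x x' a a', E x x' a a' = (U a x)ᴴ * U a' x' := by
  classical
  obtain ⟨C, hC⟩ := psd_factor hE.1
  let e := Fintype.equivFin ((X × A) × Fin d)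
  have key : ∀ x x' a a', E x x' a a' =
      (Matrix.of (fun r i => C (e.symm r) ((x, a), i)))ᴴ *
        (Matrix.of (fun r i => C (e.symm r) ((x', a'), i))) := by
    intro x x' a a'
    ext i j
    have h := congrFun (congrFun hC ((x, a), i)) ((x', a'), j)
    simp only [Matrix.of_apply, Matrix.mul_apply, Matrix.conjTranspose_apply] at h ⊢
    rw [h]
    exact (Equiv.sum_comp e.symm (fun r => star (C r ((x, a), i)) * C r ((x', a'), j))).symm
  refine ⟨_, fun a x => Matrix.of (fun r i => C (e.symm r) ((x, a), i)), ?_, key⟩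
  intro x x'
  rw [← hE.2 x x']
  exact Finset.sum_congr rfl fun a _ => (key x x' a a).symm

theorem isom_ampl {Y B : Type*} [Fintype B] [DecidableEq Y] {d k : ℕ}
    {R : Type*} [Fintype R] [DecidableEq R] {d' k' : ℕ}
    (e : Fin d' ≃ Fin d × R) (f : Fin k' ≃ Fin k × R)
    (V : B → Y → Matrix (Fin k) (Fin d) ℂ) (hV : IsBlockIsometryFam V) :
    IsBlockIsometryFam (fun b y => (V b y ⊗ₖ (1 : Matrix R R ℂ)).submatrix f e) ∧
    ∀ b b' y y', ((V b y ⊗ₖ (1 : Matrix R R ℂ)).submatrix f e)ᴴ *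
      ((V b' y' ⊗ₖ (1 : Matrix R R ℂ)).submatrix f e) =
      (((V b y)ᴴ * V b' y') ⊗ₖ (1 : Matrix R R ℂ)).submatrix e e := by
  have key : ∀ b b' y y', ((V b y ⊗ₖ (1 : Matrix R R ℂ)).submatrix f e)ᴴ *
      ((V b' y' ⊗ₖ (1 : Matrix R R ℂ)).submatrix f e) =
      (((V b y)ᴴ * V b' y') ⊗ₖ (1 : Matrix R R ℂ)).submatrix e e := by
    intro b b' y y'
    rw [Matrix.conjTranspose_submatrix, Matrix.submatrix_mul_equiv,
      Matrix.conjTranspose_kronecker, ← Matrix.mul_kronecker_mul]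
    simp
  refine ⟨?_, key⟩
  intro y y'
  simp only [key]
  have h : ∑ b, (((V b y)ᴴ * V b y') ⊗ₖ (1 : Matrix R R ℂ)).submatrix e e =
      ((∑ b, (V b y)ᴴ * V b y') ⊗ₖ (1 : Matrix R R ℂ)).submatrix e e := by
    ext i j
    simp [Matrix.sum_apply, Finset.sum_mul]
  rw [h, hV y y']
  split_ifs
  · simp
  · simp

theorem purify {m n R N : Type*} [Fintype m] [Fintype n] [Fintype R] [Fintype N]
    [DecidableEq R] (e : N ≃ n × R)
    (C : Matrix (m × n) R ℂ) (S : Matrix m m ℂ) (T : Matrix n n ℂ) :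
    star (fun p : m × N => C (p.1, (e p.2).1) (e p.2).2) ⬝ᵥ
      ((S ⊗ₖ ((T ⊗ₖ (1 : Matrix R R ℂ)).submatrix e e)) *ᵥ
        (fun p : m × N => C (p.1, (e p.2).1) (e p.2).2)) =
    Matrix.trace ((C * Cᴴ) * (S ⊗ₖ T)) := by
  classical
  have h1 : ∀ g : m × N → ℂ, ∑ p, g p = ∑ p : (m × n), ∑ r : R, g (p.1, e.symm (p.2, r)) := by
    intro g
    simp only [Fintype.sum_prod_type]
    refine Finset.sum_congr rfl fun i _ => ?_
    rw [← Equiv.sum_comp e.symm, Fintype.sum_prod_type]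
  rw [Matrix.mul_assoc, Matrix.trace_mul_comm, Matrix.mul_assoc]
  rw [Matrix.trace_mul_comm, Matrix.mul_assoc]
  simp only [dotProduct, Matrix.mulVec, h1, Matrix.trace, Matrix.mul_apply, Matrix.diag_apply,
    Matrix.submatrix_apply, Matrix.kroneckerMap_apply, Equiv.apply_symm_apply, Pi.star_apply,
    Matrix.conjTranspose_apply, Matrix.one_apply, mul_ite, mul_one, mul_zero, ite_mul, zero_mul,
    Finset.sum_ite_eq, Finset.mem_univ, if_true]
  refine Finset.sum_congr rfl fun i _ => ?_
  simp only [Finset.mul_sum]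
  rw [Finset.sum_comm]
  refine Finset.sum_congr rfl fun j _ => Finset.sum_congr rfl fun r _ => ?_
  ring

/-- Equivalence of the two descriptions of QNS correlations of
quantum type: via tensor products of stochastic operator matrices and a unit vector,
and via block operator isometries and a density operator. -/
theorem statement10
    {X Y A B : Type} [Fintype X] [Fintype Y] [Fintype A] [Fintype B]
    [Nonempty X] [Nonempty Y] [Nonempty A] [Nonempty B]
    [DecidableEq X] [DecidableEq Y] [DecidableEq A] [DecidableEq B]
    (Γ : Matrix (X × Y) (X × Y) ℂ →ₗ[ℂ] Matrix (A × B) (A × B) ℂ) :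
    (∃ (dA dB : ℕ)
        (E : X → X → A → A → Matrix (Fin dA) (Fin dA) ℂ)
        (F : Y → Y → B → B → Matrix (Fin dB) (Fin dB) ℂ)
        (ξ : Fin dA × Fin dB → ℂ),
        IsStochasticMatrixFam E ∧ IsStochasticMatrixFam F ∧
        (∑ i, ‖ξ i‖ ^ 2 = 1) ∧
        (∀ (x x' : X) (y y' : Y),
          Γ ((Matrix.single x x' (1 : ℂ)) ⊗ₖ (Matrix.single y y' (1 : ℂ)))
            = Matrix.of fun p q =>
                dotProduct (star ξ) ((E x x' p.1 q.1 ⊗ₖ F y y' p.2 q.2).mulVec ξ)))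
    ↔
    (∃ (dA kA dB kB : ℕ)
        (U : A → X → Matrix (Fin kA) (Fin dA) ℂ)
        (V : B → Y → Matrix (Fin kB) (Fin dB) ℂ)
        (σ : Matrix (Fin dA × Fin dB) (Fin dA × Fin dB) ℂ),
        IsBlockIsometryFam U ∧ IsBlockIsometryFam V ∧
        σ.PosSemidef ∧ σ.trace = 1 ∧
        (∀ (x x' : X) (y y' : Y),
          Γ ((Matrix.single x x' (1 : ℂ)) ⊗ₖ (Matrix.single y y' (1 : ℂ)))
            = Matrix.of fun p q =>
                Matrix.trace (σ * (((U p.1 x)ᴴ * U q.1 x') ⊗ₖ ((V p.2 y)ᴴ * V q.2 y'))))) := by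
  constructor
  · rintro ⟨dA, dB, E, F, ξ, hE, hF, hξ, h⟩
    obtain ⟨kA, U, hU, hEU⟩ := isom_of_stoch E hE
    obtain ⟨kB, V, hV, hFV⟩ := isom_of_stoch F hF
    refine ⟨dA, kA, dB, kB, U, V, Matrix.vecMulVec ξ (star ξ), hU, hV,
      Matrix.posSemidef_vecMulVec_self_star ξ, ?_, ?_⟩
    · rw [Matrix.trace_vecMulVec]
      have : ((∑ i, ‖ξ i‖ ^ 2 : ℝ) : ℂ) = 1 := by rw [hξ]; simp
      rw [← this]
      push_cast
      exact Finset.sum_congr rfl fun i _ => Complex.mul_conj' (ξ i)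
    · intro x x' y y'
      rw [h]
      ext p q
      simp only [Matrix.of_apply, hEU, hFV]
      rw [Matrix.vecMulVec_mul, Matrix.trace_vecMulVec,
        Matrix.dotProduct_mulVec, dotProduct_comm]
  · rintro ⟨dA, kA, dB, kB, U, V, σ, hU, hV, hσ, htr, h⟩
    obtain ⟨D, hD⟩ := psd_factor hσ
    obtain ⟨C, hC⟩ : ∃ C, σ = C * Cᴴ := ⟨Dᴴ, by simpa using hD⟩
    let e := (Fintype.equivFin (Fin dB × (Fin dA × Fin dB))).symm
    let f := (Fintype.equivFin (Fin kB × (Fin dA × Fin dB))).symm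
    obtain ⟨hW, hWV⟩ := isom_ampl e f V hV
    refine ⟨dA, _, _, _, fun p => C (p.1, (e p.2).1) (e p.2).2, stoch_of_isom U hU,
      stoch_of_isom _ hW, ?_, ?_⟩
    · have h0 := purify e C 1 1
      rw [Matrix.one_kronecker_one, Matrix.one_kronecker_one, Matrix.submatrix_one_equiv,
        Matrix.one_kronecker_one, Matrix.one_mulVec, Matrix.mul_one, ← hC, htr] at h0
      have : ((∑ i : Fin dA × Fin _, ‖C (i.1, (e i.2).1) (e i.2).2‖ ^ 2 : ℝ) : ℂ) = 1 := by
        rw [← h0]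
        push_cast
        exact Finset.sum_congr rfl fun i _ => (Complex.conj_mul' _).symm
      exact_mod_cast this
    · intro x x' y y'
      rw [h]
      ext p q
      simp only [Matrix.of_apply, hWV]
      rw [purify, hC]
end

section
/- Let X, Y, A, B be finite nonempty sets. For a linear map Γ : M_{X×Y} → M_{A×B} the following are equivalent: (i) Γ is a quantum commuting QNS correlation, i.e. there exist a complex Hilbert space H, a unit vector ξ ∈ H, and stochastic operator matrices E = (E_{x,x',a,a'}) over (X,A) and F = (F_{y,y',b,b'}) over (Y,B), both acting on H, such that every E_{x,x',a,a'} commutes with every F_{y,y',b,b'} and Γ(ε_{x,x'} ⊗ ε_{y,y'}) = Σ_{a,a'∈A, b,b'∈B} ⟨E_{x,x',a,a'} F_{y,y',b,b'} ξ, ξ⟩ ε_{a,a'} ⊗ ε_{b,b'}; (ii) there exist complex Hilbert spaces H, K, L, a block operator isometry U = (U_{a,x}) over (X,A) with entries in B(K,L), a block operator isometry V = (V_{b,y}) over (Y,B) with entries in B(H,K), such that U_{a,x}* U_{a',x'} commutes with V_{b,y} V_{b',y'}* for all x,x' ∈ X, y,y' ∈ Y, a,a' ∈ A, b,b' ∈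 B, and a unit vector ζ ∈ H, such that Γ(ε_{x,x'} ⊗ ε_{y,y'}) = Σ_{a,a'∈A, b,b'∈B} ⟨U_{a',x'} V_{b',y'} ζ, U_{a,x} V_{b,y} ζ⟩ ε_{a,a'} ⊗ ε_{b,b'}. -/
open Matrix ContinuousLinearMap
open scoped Kronecker ComplexOrder ComplexInnerProductSpace

/-- A bundled complex Hilbert space. -/
structure HilbertC : Type 1 where
  carrier : Type
  [nacg : NormedAddCommGroup carrier]
  [ips : InnerProductSpace ℂ carrier]
  [cs : CompleteSpace carrier]

attribute [instance] HilbertC.nacg HilbertC.ips HilbertC.cs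

/-- A stochastic operator matrix over `(X, A)` acting on a Hilbert space `H`:
the block operator matrix on `ℂ^{X×A} ⊗ H` is positive, and the partial trace
over `A` is the identity. -/
def IsStochasticOperatorMatrix {X A : Type*} [Fintype X] [Fintype A] [DecidableEq X]
    {H : Type*} [NormedAddCommGroup H] [InnerProductSpace ℂ H]
    (E : X → X → A → A → (H →L[ℂ] H)) : Prop :=
  (∀ ξ : X × A → H,
    0 ≤ ∑ p : X × A, ∑ q : X × A, (⟪ξ p, (E p.1 q.1 p.2 q.2) (ξ q)⟫ : ℂ)) ∧
  (∀ x x' : X, ∑ a : A, E x x' a a = if x = x' then 1 else 0)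

noncomputable section

/-- the coordinate embedding into the l2 sum -/
def qnsIota {I : Type} [Fintype I] {H : Type} [NormedAddCommGroup H]
    [InnerProductSpace ℂ H] [CompleteSpace H] (i : I) :
    H →L[ℂ] PiLp 2 (fun _ : I => H) :=
  adjoint (PiLp.proj (𝕜 := ℂ) 2 (fun _ : I => H) i)

lemma qnsIota_apply {I : Type} [Fintype I] [DecidableEq I] {H : Type} [NormedAddCommGroup H]
    [InnerProductSpace ℂ H] [CompleteSpace H] (i j : I) (h : H) :
    (qnsIota i h : PiLp 2 (fun _ : I => H)) j = if j = i then h else 0 := by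
  have : (qnsIota i h : PiLp 2 (fun _ : I => H)) = PiLp.single 2 i h := by
    refine ext_inner_right ℂ fun v => ?_
    rw [qnsIota, adjoint_inner_left, PiLp.inner_apply, Finset.sum_eq_single i]
    · simp
    · intro b _ hb
      simp [hb]
    · simp
  rw [this, PiLp.single_apply]

/-- the operator given by a block matrix -/
def qnsBlock {I : Type} [Fintype I] {H : Type} [NormedAddCommGroup H]
    [InnerProductSpace ℂ H] [CompleteSpace H] (E : I → I → (H →L[ℂ] H)) :
    PiLp 2 (fun _ : I => H) →L[ℂ] PiLp 2 (fun _ : I => H) :=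
  ∑ i, ∑ j, qnsIota i ∘L E i j ∘L PiLp.proj (𝕜 := ℂ) 2 (fun _ : I => H) j

lemma qnsBlock_apply {I : Type} [Fintype I] {H : Type} [NormedAddCommGroup H]
    [InnerProductSpace ℂ H] [CompleteSpace H] (E : I → I → (H →L[ℂ] H))
    (η : PiLp 2 (fun _ : I => H)) (i : I) :
    (qnsBlock E η) i = ∑ j, E i j (η j) := by
  classical
  simp only [qnsBlock, _root_.sum_apply, WithLp.ofLp_sum, Finset.sum_apply,
    ContinuousLinearMap.comp_apply, qnsIota_apply, PiLp.proj_apply]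
  rw [Finset.sum_eq_single i]
  · simp
  · intro b _ hb
    simp [Ne.symm hb]
  · simp

/-- the diagonal amplification -/
def qnsDiag (I : Type) [Fintype I] {H : Type} [NormedAddCommGroup H]
    [InnerProductSpace ℂ H] [CompleteSpace H] (a : H →L[ℂ] H) :
    PiLp 2 (fun _ : I => H) →L[ℂ] PiLp 2 (fun _ : I => H) :=
  ∑ i, qnsIota i ∘L a ∘L PiLp.proj (𝕜 := ℂ) 2 (fun _ : I => H) i

lemma qnsDiag_apply {I : Type} [Fintype I] {H : Type} [NormedAddCommGroup H]
    [InnerProductSpace ℂ H] [CompleteSpace H] (a : H →L[ℂ] H)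
    (η : PiLp 2 (fun _ : I => H)) (i : I) :
    (qnsDiag I a η) i = a (η i) := by
  classical
  simp only [qnsDiag, _root_.sum_apply, WithLp.ofLp_sum, Finset.sum_apply,
    ContinuousLinearMap.comp_apply, qnsIota_apply, PiLp.proj_apply]
  rw [Finset.sum_eq_single i]
  · simp
  · intro b _ hb
    simp [Ne.symm hb]
  · simp

lemma qnsBlock_nonneg {I : Type} [Fintype I] {H : Type} [NormedAddCommGroup H]
    [InnerProductSpace ℂ H] [CompleteSpace H] (E : I → I → (H →L[ℂ] H))
    (hE : ∀ ξ : I → H, 0 ≤ ∑ p, ∑ q, (⟪ξ p, E p q (ξ q)⟫ : ℂ)) : 0 ≤ qnsBlock E := by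
  rw [nonneg_iff_isPositive, isPositive_iff_complex]
  intro η
  have h : 0 ≤ (⟪η, qnsBlock E η⟫ : ℂ) := by
    simpa only [PiLp.inner_apply, qnsBlock_apply, inner_sum] using hE η
  have hs : (⟪qnsBlock E η, η⟫ : ℂ) = (starRingEnd ℂ) ⟪η, qnsBlock E η⟫ :=
    (inner_conj_symm _ _).symm
  obtain ⟨h1, h2⟩ := Complex.nonneg_iff.1 h
  rw [hs]
  refine ⟨?_, ?_⟩
  · apply Complex.ext
    · simp only [RCLike.re_to_complex, Complex.ofReal_re]
    · simp only [Complex.ofReal_im, Complex.conj_im, ← h2, neg_zero]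
  · simpa only [RCLike.re_to_complex, Complex.conj_re] using h1

lemma qnsDiag_comm {I : Type} [Fintype I] {H : Type} [NormedAddCommGroup H]
    [InnerProductSpace ℂ H] [CompleteSpace H] (E : I → I → (H →L[ℂ] H)) (a : H →L[ℂ] H)
    (ha : ∀ p q, Commute a (E p q)) : Commute (qnsBlock E) (qnsDiag I a) := by
  ext η i
  simp only [mul_apply_eq_comp, qnsBlock_apply, qnsDiag_apply, map_sum]
  refine Finset.sum_congr rfl fun j _ => ?_
  exact (DFunLike.congr_fun (ha i j) (η j)).symm

lemma qns_sqrt {K : Type} [NormedAddCommGroup K] [InnerProductSpace ℂ K] [CompleteSpace K]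
    (T : K →L[ℂ] K) (hT : 0 ≤ T) :
    ∃ S : K →L[ℂ] K, adjoint S = S ∧ S * S = T ∧ ∀ b, Commute T b → Commute S b :=
  ⟨CFC.sqrt T, (IsSelfAdjoint.of_nonneg (CFC.sqrt_nonneg T)).adjoint_eq,
    CFC.sqrt_mul_sqrt_self T hT, fun _ hb => hb.cfcₙ_nnreal NNReal.sqrt⟩

theorem qns_factor {I : Type} [Fintype I] {H : Type} [NormedAddCommGroup H]
    [InnerProductSpace ℂ H] [CompleteSpace H] (E : I → I → (H →L[ℂ] H))
    (hE : ∀ ξ : I → H, 0 ≤ ∑ p, ∑ q, (⟪ξ p, E p q (ξ q)⟫ : ℂ)) :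
    ∃ V : I → (H →L[ℂ] PiLp 2 (fun _ : I => H)),
      (∀ p q, adjoint (V p) ∘L V q = E p q) ∧
      ∀ a : H →L[ℂ] H, (∀ p q, Commute a (E p q)) →
        (∀ p, V p ∘L a = qnsDiag I a ∘L V p) ∧
        (∀ p, adjoint (V p) ∘L qnsDiag I a = a ∘L adjoint (V p)) := by
  classical
  have hT := qnsBlock_nonneg E hE
  set T := qnsBlock E with hTdef
  obtain ⟨S, hSa, hSS, hSc⟩ := qns_sqrt T hT
  have hadj : ∀ p : I, adjoint (S ∘L qnsIota p)
      = PiLp.proj (𝕜 := ℂ) 2 (fun _ : I => H) p ∘L S := by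
    intro p
    rw [adjoint_comp, hSa, qnsIota, adjoint_adjoint]
  refine ⟨fun p => S ∘L qnsIota p, ?_, ?_⟩
  · intro p q
    ext h
    rw [hadj]
    have : S (S (qnsIota q h)) = T (qnsIota q h) := DFunLike.congr_fun hSS _
    simp only [ContinuousLinearMap.comp_apply, PiLp.proj_apply, this, hTdef, qnsBlock_apply,
      qnsIota_apply]
    rw [Finset.sum_eq_single q]
    · simp
    · intro b _ hb
      simp [hb]
    · simp
  · intro a ha
    have hc : Commute S (qnsDiag I a) := hSc _ (qnsDiag_comm E a ha)
    have hc' : ∀ v, S (qnsDiag I a v) = qnsDiag I a (S v) := fun v => DFunLike.congr_fun hc v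
    constructor
    · intro p
      ext1 h
      simp only [ContinuousLinearMap.comp_apply]
      rw [← hc']
      refine congrArg S ?_
      ext j
      simp only [qnsDiag_apply, qnsIota_apply]
      split_ifs <;> simp
    · intro p
      ext v
      rw [hadj]
      simp only [ContinuousLinearMap.comp_apply, PiLp.proj_apply, hc', qnsDiag_apply]

lemma qnsDiag_stoch {X A I : Type} [Fintype X] [Fintype A] [DecidableEq X] [Fintype I]
    {H : Type} [NormedAddCommGroup H]
    [InnerProductSpace ℂ H] [CompleteSpace H] (E : X → X → A → A → (H →L[ℂ] H))
    (hE : IsStochasticOperatorMatrix E) :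
    IsStochasticOperatorMatrix (fun x x' a a' => qnsDiag I (E x x' a a')) := by
  constructor
  · intro η
    simp only [PiLp.inner_apply, qnsDiag_apply]
    have : ∑ p : X × A, ∑ q : X × A, ∑ i, (⟪η p i, E p.1 q.1 p.2 q.2 (η q i)⟫ : ℂ)
        = ∑ i, ∑ p : X × A, ∑ q : X × A, (⟪η p i, E p.1 q.1 p.2 q.2 (η q i)⟫ : ℂ) := by
      rw [Finset.sum_comm]
      conv_rhs => rw [Finset.sum_comm]
      rw [Finset.sum_comm]
      refine Finset.sum_congr rfl fun p _ => ?_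
      rw [Finset.sum_comm]
    rw [this]
    exact Finset.sum_nonneg fun i _ => hE.1 fun p => η p i
  · intro x x'
    ext v i
    simp only [_root_.sum_apply, WithLp.ofLp_sum, Finset.sum_apply, qnsDiag_apply]
    have := DFunLike.congr_fun (hE.2 x x') (v i)
    rw [_root_.sum_apply] at this
    rw [this]
    split_ifs <;> simp

lemma qns_gram_nonneg {I : Type} [Fintype I] {L : Type} [NormedAddCommGroup L]
    [InnerProductSpace ℂ L] (v : I → L) : 0 ≤ ∑ p, ∑ q, (⟪v p, v q⟫ : ℂ) := by
  have : ∑ p, ∑ q, (⟪v p, v q⟫ : ℂ) = ⟪∑ p, v p, ∑ q, v q⟫ := by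
    simp only [sum_inner, inner_sum]
    exact Finset.sum_comm
  rw [this, inner_self_eq_norm_sq_to_K]
  norm_cast
  positivity

end

/-- A linear map `Γ : M_{X×Y} → M_{A×B}` is a quantum commuting QNS
correlation iff it arises from a pair of semi-commuting block operator isometries and
a unit vector. -/
theorem statement11
    {X Y A B : Type} [Fintype X] [Fintype Y] [Fintype A] [Fintype B]
    [Nonempty X] [Nonempty Y] [Nonempty A] [Nonempty B]
    [DecidableEq X] [DecidableEq Y] [DecidableEq A] [DecidableEq B]
    (Γ : Matrix (X × Y) (X × Y) ℂ →ₗ[ℂ] Matrix (A × B) (A × B) ℂ) :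
    (∃ (ℍ : HilbertC) (ξ : ℍ.carrier)
        (E : X → X → A → A → (ℍ.carrier →L[ℂ] ℍ.carrier))
        (F : Y → Y → B → B → (ℍ.carrier →L[ℂ] ℍ.carrier)),
        ‖ξ‖ = 1 ∧
        IsStochasticOperatorMatrix E ∧ IsStochasticOperatorMatrix F ∧
        (∀ (x x' : X) (y y' : Y) (a a' : A) (b b' : B),
          Commute (E x x' a a') (F y y' b b')) ∧
        (∀ (x x' : X) (y y' : Y),
          Γ ((Matrix.single x x' (1 : ℂ)) ⊗ₖ (Matrix.single y y' (1 : ℂ)))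
            = Matrix.of fun p q =>
                (⟪ξ, ((E x x' p.1 q.1) ∘L (F y y' p.2 q.2)) ξ⟫ : ℂ)))
    ↔
    (∃ (ℍ 𝕂 𝕃 : HilbertC)
        (U : A → X → (𝕂.carrier →L[ℂ] 𝕃.carrier))
        (V : B → Y → (ℍ.carrier →L[ℂ] 𝕂.carrier))
        (ζ : ℍ.carrier),
        (∀ x x' : X, ∑ a : A, (adjoint (U a x)) ∘L (U a x') = if x = x' then 1 else 0) ∧
        (∀ y y' : Y, ∑ b : B, (adjoint (V b y)) ∘L (V b y') = if y = y' then 1 else 0) ∧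
        (∀ (x x' : X) (y y' : Y) (a a' : A) (b b' : B),
          Commute ((adjoint (U a x)) ∘L (U a' x')) ((V b y) ∘L (adjoint (V b' y')))) ∧
        ‖ζ‖ = 1 ∧
        (∀ (x x' : X) (y y' : Y),
          Γ ((Matrix.single x x' (1 : ℂ)) ⊗ₖ (Matrix.single y y' (1 : ℂ)))
            = Matrix.of fun p q =>
                (⟪(U p.1 x) ((V p.2 y) ζ), (U q.1 x') ((V q.2 y') ζ)⟫ : ℂ))) := by
  constructor
  · rintro ⟨ℍ, ξ, E, F, hξ, hE, hF, hc, hΓ⟩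
    obtain ⟨V, hV, hVD⟩ := qns_factor (I := Y × B) (fun p q => F p.1 q.1 p.2 q.2) hF.1
    have hDE := qnsDiag_stoch (I := Y × B) E hE
    obtain ⟨U, hU, -⟩ := qns_factor (I := X × A)
      (fun p q => qnsDiag (Y × B) (E p.1 q.1 p.2 q.2)) hDE.1
    have hD := fun x x' a a' => hVD (E x x' a a') (fun p q => hc x x' p.1 q.1 a a' p.2 q.2)
    refine ⟨ℍ, ⟨PiLp 2 (fun _ : Y × B => ℍ.carrier)⟩,
      ⟨PiLp 2 (fun _ : X × A => PiLp 2 (fun _ : Y × B => ℍ.carrier))⟩,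
      fun a x => U (x, a), fun b y => V (y, b), ξ, ?_, ?_, ?_, hξ, ?_⟩
    · intro x x'
      rw [← hDE.2 x x']
      exact Finset.sum_congr rfl fun a _ => hU (x, a) (x', a)
    · intro y y'
      rw [← hF.2 y y']
      exact Finset.sum_congr rfl fun b _ => hV (y, b) (y', b)
    · intro x x' y y' a a' b b'
      have h1 := (hD x x' a a').1 (y, b)
      have h2 := (hD x x' a a').2 (y', b')
      have h3 := hU (x, a) (x', a')
      dsimp only at h3 ⊢
      rw [h3]
      ext1 v
      have h1' := DFunLike.congr_fun h1 (adjoint (V (y', b')) v)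
      have h2' := DFunLike.congr_fun h2 v
      change qnsDiag (Y × B) (E x x' a a') (V (y, b) (adjoint (V (y', b')) v))
        = V (y, b) (adjoint (V (y', b')) (qnsDiag (Y × B) (E x x' a a') v))
      exact h1'.symm.trans (congrArg (V (y, b)) h2'.symm)
    · intro x x' y y'
      rw [hΓ]
      ext p q
      have h1 := DFunLike.congr_fun ((hD x x' p.1 q.1).2 (y, p.2)) (V (y', q.2) ξ)
      have h3 := DFunLike.congr_fun (hU (x, p.1) (x', q.1)) (V (y', q.2) ξ)
      have h4 := DFunLike.congr_fun (hV (y, p.2) (y', q.2)) ξ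
      simp only [ContinuousLinearMap.comp_apply] at h1 h3 h4
      simp only [Matrix.of_apply, ContinuousLinearMap.comp_apply]
      rw [← h4, ← h1, ← h3, adjoint_inner_right, adjoint_inner_right]
  · rintro ⟨ℍ, 𝕂, 𝕃, U, V, ζ, hU, hV, hc, hζ, hΓ⟩
    obtain ⟨y₀⟩ := (inferInstance : Nonempty Y)
    have hV1 : ∀ h, ∑ b, adjoint (V b y₀) (V b y₀ h) = h := by
      intro h
      simpa [_root_.sum_apply] using DFunLike.congr_fun (hV y₀ y₀) h
    let E : X → X → A → A → (ℍ.carrier →L[ℂ] ℍ.carrier) := fun x x' a a' =>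
      ∑ b, adjoint (V b y₀) ∘L (adjoint (U a x) ∘L U a' x') ∘L V b y₀
    have hEa : ∀ x x' a a' h, E x x' a a' h
        = ∑ b, adjoint (V b y₀) (adjoint (U a x) (U a' x' (V b y₀ h))) := by
      intro x x' a a' h
      simp [E, _root_.sum_apply]
    have hc' : ∀ x x' y y' a a' b b' k,
        adjoint (U a x) (U a' x' (V b y (adjoint (V b' y') k)))
          = V b y (adjoint (V b' y') (adjoint (U a x) (U a' x' k))) :=
      fun x x' y y' a a' b b' k => DFunLike.congr_fun (hc x x' y y' a a' b b') k
    have hVE : ∀ x x' a a' b y h,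
        V b y (E x x' a a' h) = adjoint (U a x) (U a' x' (V b y h)) := by
      intro x x' a a' b y h
      rw [hEa, map_sum]
      conv_rhs => rw [← hV1 h]
      simp only [map_sum, hc']
    have hEV : ∀ x x' a a' b y k,
        E x x' a a' (adjoint (V b y) k) = adjoint (V b y) (adjoint (U a x) (U a' x' k)) := by
      intro x x' a a' b y k
      rw [hEa]
      simp only [hc', hV1]
    refine ⟨ℍ, ζ, E, fun y y' b b' => adjoint (V b y) ∘L V b' y', hζ, ⟨?_, ?_⟩, ⟨?_, ?_⟩, ?_, ?_⟩
    · intro ξ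
      have : ∑ p : X × A, ∑ q : X × A, (⟪ξ p, E p.1 q.1 p.2 q.2 (ξ q)⟫ : ℂ)
        = ∑ b, ∑ p : X × A, ∑ q : X × A,
          (⟪U p.2 p.1 (V b y₀ (ξ p)), U q.2 q.1 (V b y₀ (ξ q))⟫ : ℂ) := by
        simp only [hEa, inner_sum, adjoint_inner_right]
        conv_rhs => rw [Finset.sum_comm]
        refine Finset.sum_congr rfl fun p _ => ?_
        rw [Finset.sum_comm]
      rw [this]
      exact Finset.sum_nonneg fun b _ => qns_gram_nonneg _
    · intro x x'
      ext h
      have h1 : ∀ k, ∑ a, adjoint (U a x) (U a x' k)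
          = (if x = x' then (1 : 𝕂.carrier →L[ℂ] 𝕂.carrier) else 0) k := by
        intro k
        rw [← hU x x', _root_.sum_apply]
        rfl
      simp only [_root_.sum_apply, hEa]
      rw [Finset.sum_comm]
      simp only [← map_sum, h1]
      split_ifs
      · simpa using hV1 h
      · simp
    · intro ξ
      simp only [ContinuousLinearMap.comp_apply, adjoint_inner_right]
      exact qns_gram_nonneg fun p : Y × B => V p.2 p.1 (ξ p)
    · exact hV
    · intro x x' y y' a a' b b'
      ext1 h
      simp only [mul_apply_eq_comp, ContinuousLinearMap.comp_apply, hVE, hEV]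
    · intro x x' y y'
      rw [hΓ]
      ext p q
      simp only [Matrix.of_apply, ContinuousLinearMap.comp_apply, hEV, adjoint_inner_right]
end
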